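/- arXiv:1801.06244 — 2 statements merged into one kernel-verified Lean document; each statement's English description precedes it below -/
import Mathlib

section
/- Euler's Pentagonal Number Theorem: for |q| < 1, ∏_{n=1}^∞ (1 - qⁿ) = Σ_{n∈ℤ} (-1)ⁿ q^{n(3n-1)/2}. -/
open Filter Topology in
/-- The partial products are bounded uniformly in `k` and `n`. -/
theorem norm_prod_bound (q : ℂ) (hq : ‖q‖ < 1) (k n : ℕ) :
    ‖∏ i ∈ Finset.range (n + 1), (1 - q ^ (k + i + 1))‖ ≤ Real.exp (1 - ‖q‖)⁻¹ := by
  have h0 : 0 ≤ ‖q‖ := norm_nonneg q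
  rw [norm_prod]
  calc ∏ i ∈ Finset.range (n + 1), ‖1 - q ^ (k + i + 1)‖
      ≤ ∏ i ∈ Finset.range (n + 1), Real.exp (‖q‖ ^ i) := by
        refine Finset.prod_le_prod (fun _ _ ↦ norm_nonneg _) fun i _ ↦ ?_
        have h1 : ‖1 - q ^ (k + i + 1)‖ ≤ 1 + ‖q‖ ^ (k + i + 1) := by
          simpa using norm_sub_le (1 : ℂ) (q ^ (k + i + 1))
        have h2 : ‖q‖ ^ (k + i + 1) ≤ ‖q‖ ^ i :=
          pow_le_pow_of_le_one h0 hq.le (by omega)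
        linarith [Real.add_one_le_exp (‖q‖ ^ i)]
    _ = Real.exp (∑ i ∈ Finset.range (n + 1), ‖q‖ ^ i) := (Real.exp_sum _ _).symm
    _ ≤ Real.exp (1 - ‖q‖)⁻¹ := by
        rw [Real.exp_le_exp, ← tsum_geometric_of_lt_one h0 hq]
        exact (summable_geometric_of_lt_one h0 hq).sum_le_tsum _ (fun i _ ↦ by positivity)

theorem norm_term_bound (q : ℂ) (hq : ‖q‖ < 1) (k n : ℕ) :
    ‖q ^ ((k + 1) * n) * ∏ i ∈ Finset.range (n + 1), (1 - q ^ (k + i + 1))‖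
      ≤ ‖q‖ ^ n * Real.exp (1 - ‖q‖)⁻¹ := by
  rw [norm_mul, norm_pow]
  refine mul_le_mul ?_ (norm_prod_bound q hq k n) (norm_nonneg _) (by positivity)
  exact pow_le_pow_of_le_one (norm_nonneg q) hq.le (by nlinarith [Nat.zero_le (k * n)])

theorem summable_bound (q : ℂ) (hq : ‖q‖ < 1) :
    Summable fun n : ℕ ↦ ‖q‖ ^ n * Real.exp (1 - ‖q‖)⁻¹ :=
  (summable_geometric_of_lt_one (norm_nonneg q) hq).mul_right _

theorem hasSum_nat_of_int (q : ℂ) (hq : ‖q‖ < 1) :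
    HasSum (fun k : ℕ ↦ (-1 : ℂ) ^ k * (q ^ pentagonal (-k) - q ^ pentagonal (k + 1)))
      (∑' n : ℤ, (-1 : ℂ) ^ n * q ^ pentagonal n) := by
  have hs : Summable fun n : ℤ ↦ (-1 : ℂ) ^ n * q ^ pentagonal n := by
    refine Summable.of_norm ?_
    simpa [Function.comp_def] using
      (summable_geometric_of_lt_one (norm_nonneg q) hq).comp_injective pentagonal_injective
  have h := hs.hasSum
  rw [← neg_injective.hasSum_iff (fun x hx ↦ by absurd hx; use -x; simp)] at h
  convert h.nat_add_neg_add_one using 2 with k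
  have e : ((-1 : ℂ)) ^ ((k : ℤ) + 1) = -(-1) ^ k := by
    rw [zpow_add₀ (by norm_num)]; simp
  have e' : ((-1 : ℂ)) ^ (-(k : ℤ)) = (-1) ^ k := by
    rw [zpow_neg, zpow_natCast, ← inv_pow]; norm_num
  simp only [Function.comp_apply, neg_neg, e, e']
  ring

/-- Euler's Pentagonal Number Theorem: for `|q| < 1`,
`∏_{n=1}^∞ (1 - qⁿ) = Σ_{n∈ℤ} (-1)ⁿ q^{n(3n-1)/2}`. -/
theorem pentagonal_number_theorem (q : ℂ) (hq : ‖q‖ < 1) :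
    ∏' n : ℕ, (1 - q ^ (n + 1)) =
      ∑' n : ℤ, (-1 : ℂ) ^ n * q ^ (n * (3 * n - 1) / 2).toNat := by
  simp_rw [← pentagonal_def]
  have hsum := hasSum_nat_of_int q hq
  have h0 : 0 ≤ ‖q‖ := norm_nonneg q
  rw [← hsum.tsum_eq]
  refine Pentagonal.tprod_one_sub_pow (tendsto_pow_atTop_nhds_zero_of_norm_lt_one hq)
    (fun k ↦ Summable.of_norm_bounded (summable_bound q hq) (norm_term_bound q hq k))
    (fun k ↦ ?_) hsum.summable ?_
  · simp_rw [sub_eq_add_neg]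
    refine multipliable_one_add_of_summable ?_
    simp_rw [norm_neg, norm_pow, add_assoc]
    exact (summable_nat_add_iff (k + 1)).mpr (summable_geometric_of_lt_one h0 hq)
  · refine squeeze_zero_norm (a := fun k : ℕ ↦ ‖q‖ ^ k *
      ∑' n : ℕ, ‖q‖ ^ n * Real.exp (1 - ‖q‖)⁻¹) (fun k ↦ ?_) ?_
    · rw [norm_mul]
      refine mul_le_mul ?_ (tsum_of_norm_bounded (summable_bound q hq).hasSum
        (norm_term_bound q hq k)) (norm_nonneg _) (by positivity)
      rw [norm_mul, norm_pow, norm_neg, norm_one, one_pow, one_mul, norm_pow]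
      refine pow_le_pow_of_le_one h0 hq.le ?_
      rw [Nat.le_div_iff_mul_le (by norm_num)]
      nlinarith
    · simpa using (tendsto_pow_atTop_nhds_zero_of_lt_one h0 hq).mul_const
        (∑' n : ℕ, ‖q‖ ^ n * Real.exp (1 - ‖q‖)⁻¹)
end

section
/- For k ≥ 5/2 half-integral, y > 0, n > 0, m ≠ 0 real, and c > 0: ∫_{−∞+iy}^{∞+iy} τ^{−k} e^{−2πi(nτ + m/(c²τ))} dτ = 2π i^{−k} (c²n/m)^{(k−1)/2} J_{k−1}(4π√(mn)/c), where J_{k−1} is the Bessel function of the first kind (with the right side interpreted via the series Σ_p (−4π²mn/c²)^p/(p!Γ(p+k)) · 2πi^{−k}(2πn)^{k−1} when m < 0). -/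
open Complex Real

/-- The Bessel function of the first kind,
`J_ν(z) = Σ_{p=0}^∞ (-1)^p (z/2)^{2p+ν} / (p! Γ(p+ν+1))`, with principal-branch powers. -/
noncomputable def besselJ (ν : ℝ) (z : ℂ) : ℂ :=
  ∑' p : ℕ, (-1) ^ p * (z / 2) ^ (2 * p + ν : ℂ) / (p.factorial * Complex.Gamma (p + ν + 1))


open MeasureTheory Set Filter Topology FourierTransform

theorem aux_mul_cpow {z w : ℂ} (hz : z ≠ 0) (hw : w ≠ 0)
    (h : z.arg + w.arg ∈ Set.Ioc (-π) π) (a : ℂ) : (z * w) ^ a = z ^ a * w ^ a := by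
  rw [cpow_def_of_ne_zero (mul_ne_zero hz hw), cpow_def_of_ne_zero hz, cpow_def_of_ne_zero hw,
    Complex.log_mul (x := z) (y := w) hz hw h, add_mul, Complex.exp_add]

theorem aux_I_mul_cpow {w : ℂ} (hw : 0 < w.re) (a : ℂ) : (I * w) ^ a = I ^ a * w ^ a := by
  have h0 : w ≠ 0 := by rintro rfl; simp at hw
  apply aux_mul_cpow I_ne_zero h0
  have h := abs_lt.1 (abs_arg_lt_pi_div_two_iff.2 (Or.inl hw))
  rw [arg_I]
  constructor <;> linarith [h.1, h.2, Real.pi_pos]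

theorem aux_real_mul_cpow {c : ℝ} (hc : 0 < c) {w : ℂ} (hw : w ≠ 0) (a : ℂ) :
    ((c : ℂ) * w) ^ a = (c : ℂ) ^ a * w ^ a := by
  apply aux_mul_cpow (by exact_mod_cast hc.ne') hw
  rw [arg_ofReal_of_nonneg hc.le, zero_add]
  exact arg_mem_Ioc w

theorem aux_int_rpow_exp {s b : ℝ} (hs : -1 < s) (hb : 0 < b) :
    IntegrableOn (fun t : ℝ => t ^ s * Real.exp (-b * t)) (Ioi 0) := by
  simpa using integrableOn_rpow_mul_exp_neg_mul_rpow hs one_pos hb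

theorem aux_meas (s r : ℂ) : AEStronglyMeasurable
    (fun t : ℝ => (t : ℂ) ^ s * cexp (-(r * t))) (volume.restrict (Ioi 0)) := by
  apply Measurable.aestronglyMeasurable
  fun_prop

theorem aux_norm {s : ℝ} {r : ℂ} {t : ℝ} (ht : 0 < t) :
    ‖(t : ℂ) ^ (s : ℂ) * cexp (-(r * t))‖ = t ^ s * Real.exp (-r.re * t) := by
  rw [norm_mul, norm_cpow_eq_rpow_re_of_pos ht, Complex.norm_exp]
  simp

theorem aux_int_cpow {s : ℝ} {r : ℂ} (hs : -1 < s) (hr : 0 < r.re) :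
    IntegrableOn (fun t : ℝ => (t : ℂ) ^ (s : ℂ) * cexp (-(r * t))) (Ioi 0) := by
  refine Integrable.mono' (aux_int_rpow_exp hs hr) (aux_meas _ _) ?_
  filter_upwards [ae_restrict_mem measurableSet_Ioi] with t ht
  rw [aux_norm ht]

theorem aux_deriv {s : ℝ} {r : ℂ} (hs : -1 < s) (hr : 0 < r.re) :
    DifferentiableAt ℂ
      (fun r : ℂ => ∫ t in Ioi (0:ℝ), (t : ℂ) ^ (s : ℂ) * cexp (-(r * t))) r := by
  have hU : {z : ℂ | r.re / 2 < z.re} ∈ 𝓝 r :=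
    (isOpen_lt continuous_const Complex.continuous_re).mem_nhds (by simp; linarith)
  refine (hasDerivAt_integral_of_dominated_loc_of_deriv_le (μ := volume.restrict (Ioi (0:ℝ)))
    (F := fun (r : ℂ) (t : ℝ) => (t : ℂ) ^ (s : ℂ) * cexp (-(r * t)))
    (F' := fun r t => (t : ℂ) ^ (s : ℂ) * (cexp (-(r * t)) * (-t)))
    (bound := fun t => t ^ (s + 1) * Real.exp (-(r.re / 2) * t)) hU
    (Eventually.of_forall fun z => aux_meas _ _) (aux_int_cpow hs hr) ?_ ?_
    (aux_int_rpow_exp (by linarith) (by linarith)) ?_).2.differentiableAt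
  · apply Measurable.aestronglyMeasurable
    fun_prop
  · filter_upwards [ae_restrict_mem measurableSet_Ioi] with t ht z hz
    have ht : 0 < t := ht
    rw [← mul_assoc, norm_mul, aux_norm ht, norm_neg, Complex.norm_real, Real.norm_of_nonneg ht.le,
      Real.rpow_add ht, Real.rpow_one, mul_right_comm]
    have hz : r.re / 2 < z.re := hz
    gcongr
  · filter_upwards with t z _
    have h : HasDerivAt (fun z : ℂ => -(z * t)) (-(t:ℂ)) z := by
      simpa using ((hasDerivAt_id z).mul_const (t:ℂ)).fun_neg
    exact (h.cexp).const_mul _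

theorem aux_gamma {s : ℝ} {r : ℂ} (hs : 0 < s) (hr : 0 < r.re) :
    ∫ t in Ioi (0:ℝ), (t : ℂ) ^ ((s - 1 : ℝ) : ℂ) * cexp (-(r * t))
      = r ^ (-(s : ℂ)) * Complex.Gamma s := by
  have hopen : IsOpen {z : ℂ | 0 < z.re} := isOpen_lt continuous_const Complex.continuous_re
  have h1 : AnalyticOnNhd ℂ (fun r : ℂ => ∫ t in Ioi (0:ℝ),
      (t : ℂ) ^ ((s - 1 : ℝ) : ℂ) * cexp (-(r * t))) {z : ℂ | 0 < z.re} :=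
    DifferentiableOn.analyticOnNhd (fun z hz =>
      (aux_deriv (by linarith) hz).differentiableWithinAt) hopen
  have h2 : AnalyticOnNhd ℂ (fun r : ℂ => r ^ (-(s : ℂ)) * Complex.Gamma s) {z : ℂ | 0 < z.re} :=
    DifferentiableOn.analyticOnNhd (fun z hz =>
      ((DifferentiableAt.cpow_const differentiableAt_id (Or.inl hz)).mul_const
        _).differentiableWithinAt) hopen
  have hpre : IsPreconnected {z : ℂ | 0 < z.re} := (convex_halfSpace_re_gt 0).isPreconnected
  refine h1.eqOn_of_preconnected_of_frequently_eq h2 hpre (z₀ := 1) (by simp) ?_ hr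
  have ht : Tendsto (fun x : ℝ => (x : ℂ)) (𝓝[≠] (1:ℝ)) (𝓝[≠] (1 : ℂ)) := by
    apply tendsto_nhdsWithin_of_tendsto_nhds_of_eventually_within
    · exact (Complex.continuous_ofReal.tendsto' 1 1 (by simp)).mono_left nhdsWithin_le_nhds
    · filter_upwards [self_mem_nhdsWithin] with x hx
      simpa using hx
  refine ht.frequently (Eventually.frequently ?_)
  have : ∀ᶠ x : ℝ in 𝓝[≠] (1:ℝ), 0 < x :=
    nhdsWithin_le_nhds (lt_mem_nhds one_pos)
  filter_upwards [this] with x hx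
  have := Complex.integral_cpow_mul_exp_neg_mul_Ioi (a := s) (r := x) (by simpa using hs) hx
  push_cast
  rw [this, one_div, inv_cpow_ofReal_nonneg hx.le, cpow_neg]

theorem aux_tau_norm {y : ℝ} (hy : 0 < y) (x : ℝ) :
    min 1 y / 2 * (1 + ‖x‖) ≤ ‖(x : ℂ) + y * I‖ := by
  have h1 := Complex.abs_re_le_norm ((x : ℂ) + y * I)
  have h2 := Complex.abs_im_le_norm ((x : ℂ) + y * I)
  simp [abs_of_pos hy] at h1 h2
  rw [Real.norm_eq_abs]
  nlinarith [min_le_left 1 y, min_le_right 1 y, abs_nonneg x]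

theorem aux_int_norm {y s : ℝ} (hy : 0 < y) (hs : 1 < s) :
    Integrable (fun x : ℝ => ‖(x : ℂ) + y * I‖ ^ (-s)) := by
  have hC : 0 < min 1 y / 2 := by positivity
  refine Integrable.mono' ((integrable_one_add_norm (E := ℝ) (μ := volume) (r := s)
    (by simpa using hs)).const_mul ((min 1 y / 2) ^ (-s))) ?_ ?_
  · apply Measurable.aestronglyMeasurable
    fun_prop
  · filter_upwards with x
    rw [Real.norm_of_nonneg (by positivity), ← Real.mul_rpow hC.le (by positivity)]
    exact Real.rpow_le_rpow_of_nonpos (by positivity) (aux_tau_norm hy x) (by linarith)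

/-- Laplace's formula on the horizontal line. -/
theorem aux_laplace {y n s : ℝ} (hy : 0 < y) (hn : 0 < n) (hs : 1 < s) :
    ∫ x : ℝ, ((x : ℂ) + y * I) ^ (-(s : ℂ)) * cexp (-(2 * π * I) * (n * ((x : ℂ) + y * I)))
      = 2 * π * I ^ (-(s : ℂ)) * ((2 * π * n : ℝ) : ℂ) ^ ((s : ℂ) - 1) / Complex.Gamma s := by
  set g : ℝ → ℂ := fun t => (t : ℂ) ^ ((s - 1 : ℝ) : ℂ) * cexp (-((2 * π * y : ℝ) * t)) with hg
  set f : ℝ → ℂ := (Ioi (0:ℝ)).indicator g with hf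
  have hpi := Real.pi_pos
  have hfi : Integrable f := by
    rw [hf, integrable_indicator_iff measurableSet_Ioi]
    exact aux_int_cpow (by linarith) (by simp; positivity)
  have hF : ∀ ξ : ℝ, 𝓕 f ξ =
      ((2 * π : ℝ) : ℂ) ^ (-(s:ℂ)) * (y + ξ * I) ^ (-(s : ℂ)) * Complex.Gamma s := by
    intro ξ
    rw [Real.fourier_real_eq_integral_exp_smul]
    have : ∀ t : ℝ, cexp (↑(-2 * π * t * ξ) * I) • f t = (Ioi (0:ℝ)).indicator
        (fun t => (t : ℂ) ^ ((s - 1 : ℝ) : ℂ) * cexp (-(((2 * π : ℝ) * (y + ξ * I)) * t))) t := by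
      intro t
      rw [hf]
      by_cases ht : t ∈ Ioi (0:ℝ)
      · rw [indicator_of_mem ht, indicator_of_mem ht, smul_eq_mul, hg, mul_left_comm,
          ← Complex.exp_add]
        congr 2
        push_cast
        ring
      · rw [indicator_of_notMem ht, indicator_of_notMem ht, smul_zero]
    simp_rw [this]
    rw [integral_indicator measurableSet_Ioi, aux_gamma (by linarith),
      aux_real_mul_cpow (by positivity)]
    · intro h
      have := congrArg Complex.re h
      simp at this
      exact hy.ne' this
    · simp
      positivity
  have hnorm : ∀ ξ : ℝ, ‖(y : ℂ) + ξ * I‖ = ‖((-ξ : ℝ) : ℂ) + y * I‖ := by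
    intro ξ
    have : ((-ξ : ℝ) : ℂ) + y * I = I * (y + ξ * I) := by
      push_cast
      linear_combination (-(ξ : ℂ)) * I_sq
    rw [this, norm_mul, norm_I, one_mul]
  have hFi : Integrable (𝓕 f) := by
    have : 𝓕 f = fun ξ : ℝ =>
      ((2 * π : ℝ) : ℂ) ^ (-(s:ℂ)) * (y + ξ * I) ^ (-(s : ℂ)) * Complex.Gamma s := funext hF
    rw [this]
    refine Integrable.mul_const (Integrable.const_mul ?_ _) _
    refine Integrable.mono' ((aux_int_norm hy hs).comp_neg) ?_ ?_
    · apply Measurable.aestronglyMeasurable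
      fun_prop
    · filter_upwards with ξ
      rw [← ofReal_neg, norm_cpow_real, hnorm]
  have hcont : ContinuousAt f n := by
    have h1 : ContinuousAt g n := by
      apply ContinuousAt.mul
      · exact continuousAt_ofReal_cpow_const n _ (Or.inr hn.ne')
      · fun_prop
    refine h1.congr ?_
    filter_upwards [lt_mem_nhds hn] with t ht
    rw [hf, indicator_of_mem (show t ∈ Ioi 0 from ht)]
  have key := hfi.fourierInv_fourier_eq hFi hcont
  have hfn : f n = (n : ℂ) ^ ((s - 1 : ℝ) : ℂ) * cexp (-((2 * π * y : ℝ) * n)) := by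
    rw [hf, indicator_of_mem (show n ∈ Ioi 0 from hn)]
  rw [Real.fourierInv_eq', hfn, ← integral_neg_eq_self] at key
  simp only [hF] at key
  have hG : Complex.Gamma s ≠ 0 := Complex.Gamma_ne_zero_of_re_pos (by simp; linarith)
  have h2pi : ((2 * π : ℝ) : ℂ) ≠ 0 := by exact_mod_cast (by positivity : (2 * π : ℝ) ≠ 0)
  have hterm : ∀ x : ℝ,
      ((x : ℂ) + y * I) ^ (-(s : ℂ)) * cexp (-(2 * π * I) * (n * ((x : ℂ) + y * I)))
      = (I ^ (-(s : ℂ)) * cexp (2 * π * n * y) * ((2 * π : ℝ) : ℂ) ^ (s : ℂ) / Complex.Gamma s) *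
        (cexp (↑(2 * π * inner ℝ (-x) n) * I) •
          (((2 * π : ℝ) : ℂ) ^ (-(s:ℂ)) * (y + (-x : ℝ) * I) ^ (-(s : ℂ)) * Complex.Gamma s)) := by
    intro x
    have e1 : (x : ℂ) + y * I = I * (y + (-x : ℝ) * I) := by
      push_cast
      linear_combination (x : ℂ) * I_sq
    have e2 : cexp (-(2 * π * I) * (n * ((x : ℂ) + y * I))) =
        cexp (2 * π * n * y) * cexp (↑(2 * π * inner ℝ (-x) n) * I) := by
      rw [← Complex.exp_add]
      congr 1
      simp
      linear_combination (-2 * π * n * y : ℂ) * I_sq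
    have e3 : ((2 * π : ℝ) : ℂ) ^ (s : ℂ) * ((2 * π : ℝ) : ℂ) ^ (-(s:ℂ)) = 1 := by
      rw [← cpow_add _ _ h2pi]; simp
    rw [e2, e1, aux_I_mul_cpow (by simpa using hy), smul_eq_mul]
    field_simp
    linear_combination (-((y + (-x : ℝ) * I) ^ (-(s : ℂ)))) * e3
  simp_rw [hterm]
  rw [integral_const_mul, key]
  have e4 : cexp (2 * π * n * y) * cexp (-((2 * π * y : ℝ) * n)) = 1 := by
    rw [← Complex.exp_add, Complex.exp_eq_one_iff]
    exact ⟨0, by push_cast; ring⟩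
  have e5 : ((2 * π * n : ℝ) : ℂ) ^ ((s : ℂ) - 1) =
      ((2 * π : ℝ) : ℂ) ^ ((s : ℂ) - 1) * (n : ℂ) ^ ((s : ℂ) - 1) := by
    rw [ofReal_mul, mul_cpow_ofReal_nonneg (by positivity) hn.le]
  have e6 : ((2 * π : ℝ) : ℂ) ^ (s : ℂ) = ((2 * π : ℝ) : ℂ) ^ ((s : ℂ) - 1) * (2 * π) := by
    rw [cpow_sub _ _ h2pi, cpow_one]
    push_cast at h2pi ⊢
    field_simp
  rw [e5, e6, ofReal_sub, ofReal_one]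
  linear_combination (2 * π * I ^ (-(s : ℂ)) * (((2 * π : ℝ) : ℂ) ^ ((s : ℂ) - 1) *
    (n : ℂ) ^ ((s : ℂ) - 1)) / Complex.Gamma s) * e4

theorem aux_bessel {k n m c : ℝ} (hn : 0 < n) (hm : 0 < m) (hc : 0 < c) :
    ((2 * π * n : ℝ) : ℂ) ^ ((k : ℂ) - 1) *
          (∑' p : ℕ, ((-(4 * π ^ 2 * m * n / c ^ 2) : ℝ) : ℂ) ^ p /
            (p.factorial * Complex.Gamma (p + k)))
        = ((c ^ 2 * n / m : ℝ) : ℂ) ^ (((k : ℂ) - 1) / 2) *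
            besselJ (k - 1) ((4 * π * Real.sqrt (m * n) / c : ℝ) : ℂ) := by
  have hpi := Real.pi_pos
  have hsq : 0 < Real.sqrt (m * n) := Real.sqrt_pos.2 (by positivity)
  set b : ℝ := 2 * π * Real.sqrt (m * n) / c with hb
  have hb0 : 0 < b := by positivity
  have hb2 : b ^ 2 = 4 * π ^ 2 * m * n / c ^ 2 := by
    rw [hb, div_pow, mul_pow, Real.sq_sqrt (by positivity)]
    ring
  have hbC : (b : ℂ) ≠ 0 := by exact_mod_cast hb0.ne'
  have e0 : (((4 * π * Real.sqrt (m * n) / c : ℝ) : ℂ)) / 2 = (b : ℂ) := by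
    rw [hb]; push_cast; ring
  have e1 : (2 * π * n) ^ (k - 1) = (c ^ 2 * n / m) ^ ((k - 1) / 2) * b ^ (k - 1) := by
    have hd : c ^ 2 * n / m = (2 * π * n / b) ^ (2 : ℝ) := by
      rw [Real.rpow_two, div_pow, hb2]
      field_simp
      ring
    rw [hd, ← Real.rpow_mul (by positivity), mul_div_cancel₀ _ (two_ne_zero),
      ← Real.mul_rpow (by positivity) hb0.le, div_mul_cancel₀ _ hb0.ne']
  have e2 : ((2 * π * n : ℝ) : ℂ) ^ ((k : ℂ) - 1) =
      ((c ^ 2 * n / m : ℝ) : ℂ) ^ (((k : ℂ) - 1) / 2) * (b : ℂ) ^ ((k : ℂ) - 1) := by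
    have := congrArg (fun x : ℝ => (x : ℂ)) e1
    beta_reduce at this
    rw [ofReal_mul ((c ^ 2 * n / m) ^ ((k - 1) / 2)), ofReal_cpow (by positivity), ofReal_cpow (by positivity),
      ofReal_cpow (by positivity)] at this
    push_cast at this ⊢
    exact this
  rw [besselJ, e0, e2, mul_assoc, ← tsum_mul_left]
  congr 1
  refine tsum_congr fun p => ?_
  have e3 : (b : ℂ) ^ (2 * p + ((k - 1 : ℝ) : ℂ)) = (b : ℂ) ^ ((k : ℂ) - 1) * ((b : ℂ) ^ 2) ^ p := by
    rw [cpow_add _ _ hbC, mul_comm]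
    congr 1
    · push_cast; rfl
    · rw [← pow_mul, ← cpow_natCast]
      push_cast; rfl
  have e4 : ((-(4 * π ^ 2 * m * n / c ^ 2) : ℝ) : ℂ) = -1 * (b : ℂ) ^ 2 := by
    rw [← hb2]; push_cast; ring
  rw [e3, e4, mul_pow, show (p : ℂ) + ((k - 1 : ℝ) : ℂ) + 1 = p + k by push_cast; ring]
  ring

theorem aux_tau_re {y : ℝ} (hy : 0 < y) (x : ℝ) : (x : ℂ) + y * I ≠ 0 := by
  intro h
  have := congrArg Complex.im h
  simp at this
  exact hy.ne' this

theorem aux_main {k y n : ℝ} (hk : 1 < k) (hy : 0 < y) (hn : 0 < n) (A : ℂ) :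
    (∫ x : ℝ, ((x : ℂ) + y * I) ^ (-(k : ℂ)) *
        (cexp (-(2 * π * I) * (n * ((x : ℂ) + y * I))) * cexp (A / ((x : ℂ) + y * I))))
      = 2 * π * I ^ (-(k : ℂ)) * ((2 * π * n : ℝ) : ℂ) ^ ((k : ℂ) - 1) *
          ∑' p : ℕ, (A * (-I) * (2 * π * n : ℝ)) ^ p / (p.factorial * Complex.Gamma (p + k)) := by
  have hpi := Real.pi_pos
  set F : ℕ → ℝ → ℂ := fun p x => (A ^ p / p.factorial) *
    (((x : ℂ) + y * I) ^ (-((k + p : ℝ) : ℂ)) * cexp (-(2 * π * I) * (n * ((x : ℂ) + y * I))))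
    with hFdef
  have hsplit : ∀ (p : ℕ) (x : ℝ), ((x : ℂ) + y * I) ^ (-((k + p : ℝ) : ℂ)) =
      ((x : ℂ) + y * I) ^ (-(k : ℂ)) * (((x : ℂ) + y * I) ^ p)⁻¹ := by
    intro p x
    rw [show (-((k + p : ℝ) : ℂ)) = -(k : ℂ) + -(p : ℂ) by push_cast; ring,
      cpow_add _ _ (aux_tau_re hy x), cpow_neg _ (p : ℂ), cpow_natCast]
  have hB : ∀ (p : ℕ) (x : ℝ), ‖F p x‖ ≤
      ((‖A‖ / y) ^ p / p.factorial) * (Real.exp (2 * π * n * y) * ‖(x : ℂ) + y * I‖ ^ (-k)) := by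
    intro p x
    have h1 : ‖cexp (-(2 * π * I) * (n * ((x : ℂ) + y * I)))‖ = Real.exp (2 * π * n * y) := by
      rw [Complex.norm_exp]
      congr 1
      simp
      try ring
    have h2 : y ≤ ‖(x : ℂ) + y * I‖ := by
      have h2 := Complex.abs_im_le_norm ((x : ℂ) + y * I)
      simpa [abs_of_pos hy] using h2
    have h3 : (‖(x : ℂ) + y * I‖ ^ p)⁻¹ ≤ (y ^ p)⁻¹ := by gcongr
    simp only [hFdef]
    rw [hsplit, norm_mul, norm_mul, norm_mul, h1, norm_div, norm_pow, norm_inv, norm_pow,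
      ← ofReal_neg, norm_cpow_real, Complex.norm_natCast, div_pow]
    calc ‖A‖ ^ p / p.factorial * (‖(x : ℂ) + y * I‖ ^ (-k) * (‖(x : ℂ) + y * I‖ ^ p)⁻¹ *
          Real.exp (2 * π * n * y))
        ≤ ‖A‖ ^ p / p.factorial * (‖(x : ℂ) + y * I‖ ^ (-k) * (y ^ p)⁻¹ *
          Real.exp (2 * π * n * y)) := by gcongr
      _ = _ := by field_simp
  have hdom := (aux_int_norm hy hk).const_mul (Real.exp (2 * π * n * y))
  have hFi : ∀ p, Integrable (F p) := by
    intro p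
    refine Integrable.mono' (hdom.const_mul ((‖A‖ / y) ^ p / p.factorial)) ?_
      (Eventually.of_forall (hB p))
    apply Measurable.aestronglyMeasurable
    fun_prop
  have hsum : Summable fun p => ∫ x, ‖F p x‖ := by
    refine Summable.of_nonneg_of_le (fun p => integral_nonneg fun x => norm_nonneg _) (fun p => ?_)
      ((Real.summable_pow_div_factorial (‖A‖ / y)).mul_right
        (∫ x : ℝ, Real.exp (2 * π * n * y) * ‖(x : ℂ) + y * I‖ ^ (-k)))
    rw [← integral_const_mul]
    exact integral_mono (hFi p).norm (hdom.const_mul _) (hB p)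
  have key := (hasSum_integral_of_summable_integral_norm hFi hsum).tsum_eq
  have hL : ∀ x : ℝ, ∑' p, F p x = ((x : ℂ) + y * I) ^ (-(k : ℂ)) *
        (cexp (-(2 * π * I) * (n * ((x : ℂ) + y * I))) * cexp (A / ((x : ℂ) + y * I))) := by
    intro x
    have he : cexp (A / ((x : ℂ) + y * I)) =
        ∑' p : ℕ, (A / ((x : ℂ) + y * I)) ^ p / p.factorial := by
      rw [Complex.exp_eq_exp_ℂ, NormedSpace.exp_eq_tsum_div (𝔸 := ℂ)]
    rw [he, ← tsum_mul_left, ← tsum_mul_left]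
    refine tsum_congr fun p => ?_
    simp only [hFdef]
    rw [hsplit, div_pow]
    ring
  simp_rw [hL] at key
  rw [← key, ← tsum_mul_left]
  refine tsum_congr fun p => ?_
  simp only [hFdef]
  have hpp : (0:ℝ) ≤ p := Nat.cast_nonneg p
  rw [integral_const_mul, aux_laplace hy hn (by linarith)]
  have hq : ((2 * π * n : ℝ) : ℂ) ≠ 0 := by
    exact_mod_cast (by positivity : (2 * π * n : ℝ) ≠ 0)
  have e1 : ((2 * π * n : ℝ) : ℂ) ^ (((k + p : ℝ) : ℂ) - 1) =
      ((2 * π * n : ℝ) : ℂ) ^ ((k : ℂ) - 1) * ((2 * π * n : ℝ) : ℂ) ^ p := by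
    rw [show ((k + p : ℝ) : ℂ) - 1 = ((k : ℂ) - 1) + p by push_cast; ring, cpow_add _ _ hq,
      cpow_natCast]
  have e2 : I ^ (-((k + p : ℝ) : ℂ)) = I ^ (-(k : ℂ)) * (-I) ^ p := by
    rw [show (-((k + p : ℝ) : ℂ)) = -(k : ℂ) + -(p : ℂ) by push_cast; ring,
      cpow_add _ _ I_ne_zero, cpow_neg _ (p : ℂ), cpow_natCast, ← inv_pow, inv_I]
  rw [e1, e2, mul_pow, mul_pow, show ((k + p : ℝ) : ℂ) = p + k by push_cast; ring]
  ring

/-- For half-integral `k ≥ 5/2`, `y > 0`, `n > 0`, real `m ≠ 0`, and `c > 0`: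
`∫_{−∞+iy}^{∞+iy} τ^{−k} e^{−2πi(nτ + m/(c²τ))} dτ
  = 2π i^{−k} (2πn)^{k−1} Σ_{p≥0} (−4π²mn/c²)^p/(p! Γ(p+k))`,
which for `m > 0` equals `2π i^{−k} (c²n/m)^{(k−1)/2} J_{k−1}(4π√(mn)/c)`.
(`τ^{−k}` is the principal branch; the series is the interpretation of the Bessel
expression when `m < 0`.) -/
theorem contour_integral_bessel (k : ℝ) (hhalf : ∃ j : ℤ, k = j / 2) (hk : 5 / 2 ≤ k)
    (y n m c : ℝ) (hy : 0 < y) (hn : 0 < n) (hm : m ≠ 0) (hc : 0 < c) :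
    (∫ x : ℝ, ((x : ℂ) + y * Complex.I) ^ (-(k : ℂ)) *
        Complex.exp (-(2 * π * Complex.I) *
          (n * ((x : ℂ) + y * Complex.I) + m / (c ^ 2 * ((x : ℂ) + y * Complex.I)))))
      = 2 * π * Complex.I ^ (-(k : ℂ)) * ((2 * π * n : ℝ) : ℂ) ^ ((k : ℂ) - 1) *
          ∑' p : ℕ, ((-(4 * π ^ 2 * m * n / c ^ 2) : ℝ) : ℂ) ^ p /
            (p.factorial * Complex.Gamma (p + k)) ∧
    (0 < m →
      2 * π * Complex.I ^ (-(k : ℂ)) * ((2 * π * n : ℝ) : ℂ) ^ ((k : ℂ) - 1) *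
          (∑' p : ℕ, ((-(4 * π ^ 2 * m * n / c ^ 2) : ℝ) : ℂ) ^ p /
            (p.factorial * Complex.Gamma (p + k)))
        = 2 * π * Complex.I ^ (-(k : ℂ)) * ((c ^ 2 * n / m : ℝ) : ℂ) ^ (((k : ℂ) - 1) / 2) *
            besselJ (k - 1) ((4 * π * Real.sqrt (m * n) / c : ℝ) : ℂ)) := by
  refine ⟨?_, fun hm' => ?_⟩
  · have h := aux_main (k := k) (by linarith) hy hn (-(2 * π * Complex.I) * m / c ^ 2)
    have hcC : (c : ℂ) ≠ 0 := by exact_mod_cast hc.ne'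
    have hI : -(2 * π * Complex.I) * m / c ^ 2 * (-Complex.I) * ((2 * π * n : ℝ) : ℂ)
        = ((-(4 * π ^ 2 * m * n / c ^ 2) : ℝ) : ℂ) := by
      push_cast
      field_simp
      linear_combination 4 * m * n * Complex.I_sq
    rw [hI] at h
    rw [← h]
    congr 1
    funext x
    rw [← Complex.exp_add]
    congr 2
    rw [← div_div]
    ring
  · rw [mul_assoc, aux_bessel hn hm' hc, ← mul_assoc]
end
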